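/- arXiv:1502.02799 — 2 statements merged into one kernel-verified Lean document; each statement's English description precedes it below -/
import Mathlib

section
/- Let Σ be a CNF theory. If Σ is a Horn theory (respectively: a Horn renamable theory, a q-Horn theory), then the set PI(Σ) of prime implicates of Σ is a Horn theory (respectively: a Horn renamable theory, a q-Horn theory). -/
variable {α : Type*} [Fintype α] [DecidableEq α]

/-- A clause (or term): a finite set of literals, where a literal is an atom
paired with a polarity (`true` = positive occurrence, `false` = negated). -/
abbrev Clause (α : Type*) := Finset (α × Bool)

/-- A finite set of literals is a legal clause/term if it contains no
complementary pair of literals. -/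
def IsClause (c : Clause α) : Prop := ∀ p : α, ¬((p, true) ∈ c ∧ (p, false) ∈ c)

instance : DecidablePred (IsClause (α := α)) := fun c =>
  decidable_of_iff (∀ p : α, ¬((p, true) ∈ c ∧ (p, false) ∈ c)) Iff.rfl

/-- The atoms occurring in a clause/term. -/
def varsC (c : Clause α) : Finset α := c.image Prod.fst

/-- The atoms occurring positively in a clause/term. -/
def posC (c : Clause α) : Finset α := (c.filter fun l => l.2 = true).image Prod.fst

/-- The atoms occurring negatively in a clause/term. -/
def negC (c : Clause α) : Finset α := (c.filter fun l => l.2 = false).image Prod.fst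

/-- The resolvent of two clauses on atom `p`. -/
def res (c c' : Clause α) (p : α) : Clause α :=
  (c ∪ c') \ ({(p, true), (p, false)} : Finset (α × Bool))

/-- `c` and `c'` are resolvable on atom `p`: `p` occurs in one of them and `¬p` in
the other, and the resolvent contains no complementary pair of literals. -/
def ResolvableOn (c c' : Clause α) (p : α) : Prop :=
  ((p, true) ∈ c ∧ (p, false) ∈ c' ∨ (p, false) ∈ c ∧ (p, true) ∈ c') ∧ IsClause (res c c' p)

/-- Renaming of a literal: flip the polarity of atoms in `V`. -/
def renLit (V : Finset α) (l : α × Bool) : α × Bool := if l.1 ∈ V then (l.1, !l.2) else l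

/-- Renaming of a clause w.r.t. the atoms in `V`. -/
def renClause (V : Finset α) (c : Clause α) : Clause α := c.image (renLit V)

/-- Renaming of a CNF theory w.r.t. the atoms in `V`. -/
def renTheory (V : Finset α) (T : Finset (Clause α)) : Finset (Clause α) := T.image (renClause V)

/-- A Horn clause: at most one positive literal. -/
def HornClause (c : Clause α) : Prop := (posC c).card ≤ 1

/-- A Horn theory: a finite set of Horn clauses. -/
def IsHornTheory (T : Finset (Clause α)) : Prop := ∀ c ∈ T, HornClause c

/-- A Krom theory: each clause contains at most 2 literals. -/
def IsKromTheory (T : Finset (Clause α)) : Prop := ∀ c ∈ T, c.card ≤ 2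

/-- `T` is Horn renamable: some renaming of `T` is a Horn theory. -/
def IsRenHorn (T : Finset (Clause α)) : Prop := ∃ V : Finset α, IsHornTheory (renTheory V T)

/-- The QH-conditions for sets of atoms `Q`, `H` and a clause `c`. -/
def QHcond (Q H : Finset α) (c : Clause α) : Prop :=
  (varsC c ∩ Q).card ≤ 2 ∧ (posC c ∩ H).card ≤ 1 ∧
    ((posC c ∩ H).card = 1 → varsC c ∩ Q = ∅)

/-- The atoms occurring in a CNF theory. -/
def varsT (T : Finset (Clause α)) : Finset α := T.sup varsC

/-- `T` has a QH-partition: a partition `{Q, H}` of its atoms satisfying the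
QH-conditions for each of its clauses. -/
def HasQHPartition (T : Finset (Clause α)) : Prop :=
  ∃ Q H : Finset α, Q ∩ H = ∅ ∧ Q ∪ H = varsT T ∧ ∀ c ∈ T, QHcond Q H c

/-- `T` is q-Horn: some renaming of `T` has a QH-partition. -/
def IsQHorn (T : Finset (Clause α)) : Prop := ∃ V : Finset α, HasQHPartition (renTheory V T)

/-- Satisfaction of a literal by an interpretation (a set of atoms). -/
def litSat (I : Set α) (l : α × Bool) : Prop := if l.2 then l.1 ∈ I else l.1 ∉ I

/-- Satisfaction of a clause (read disjunctively). -/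
def clauseSat (I : Set α) (c : Clause α) : Prop := ∃ l ∈ c, litSat I l

/-- Satisfaction of a term (read conjunctively). -/
def termSat (I : Set α) (t : Clause α) : Prop := ∀ l ∈ t, litSat I l

/-- Satisfaction of a CNF theory. -/
def cnfSat (I : Set α) (T : Finset (Clause α)) : Prop := ∀ c ∈ T, clauseSat I c

/-- One step of the resolution closure. -/
def resStep (S : Set (Clause α)) : Set (Clause α) :=
  S ∪ {d | ∃ c ∈ S, ∃ c' ∈ S, ∃ p : α, ResolvableOn c c' p ∧ d = res c c' p}

/-- The iterated resolution closure `res^n_T`. -/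
def resIter (T : Finset (Clause α)) : ℕ → Set (Clause α)
  | 0 => (↑T : Set (Clause α))
  | n + 1 => resStep (resIter T n)

/-- Propositional formulas over atoms `α`. -/
inductive PropForm (α : Type*) where
  | var : α → PropForm α
  | tru : PropForm α
  | fls : PropForm α
  | neg : PropForm α → PropForm α
  | conj : PropForm α → PropForm α → PropForm α
  | disj : PropForm α → PropForm α → PropForm α

namespace PropForm

/-- Satisfaction of a formula by an interpretation. -/
def Sat (I : Set α) : PropForm α → Prop
  | var p => p ∈ I
  | tru => True
  | fls => False
  | neg φ => ¬ Sat I φ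
  | conj φ ψ => Sat I φ ∧ Sat I ψ
  | disj φ ψ => Sat I φ ∨ Sat I ψ

/-- Logical equivalence: same models. -/
def equivalent (φ ψ : PropForm α) : Prop := ∀ I : Set α, Sat I φ ↔ Sat I ψ

/-- Entailment: every model of `φ` is a model of `ψ`. -/
def entails (φ ψ : PropForm α) : Prop := ∀ I : Set α, Sat I φ → Sat I ψ

/-- The atoms occurring in a formula. -/
def vars : PropForm α → Finset α
  | var p => {p}
  | tru => ∅
  | fls => ∅
  | neg φ => vars φ
  | conj φ ψ => vars φ ∪ vars ψ
  | disj φ ψ => vars φ ∪ vars ψ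

/-- Substitution of the formula `χ` for the atom `p`. -/
def subst (p : α) (χ : PropForm α) : PropForm α → PropForm α
  | var q => if q = p then χ else var q
  | tru => tru
  | fls => fls
  | neg φ => neg (subst p χ φ)
  | conj φ ψ => conj (subst p χ φ) (subst p χ ψ)
  | disj φ ψ => disj (subst p χ φ) (subst p χ ψ)

/-- Forgetting a single atom: `Forget(φ, {p}) = φ[p/⊤] ∨ φ[p/⊥]`. -/
def forget1 (φ : PropForm α) (p : α) : PropForm α := disj (subst p tru φ) (subst p fls φ)

/-- Forgetting a set of atoms (presented as a list), one atom at a time: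
`Forget(φ, ∅) = φ` and `Forget(φ, V ∪ {p}) = Forget(Forget(φ, {p}), V)`. -/
def Forget : PropForm α → List α → PropForm α
  | φ, [] => φ
  | φ, p :: V => Forget (forget1 φ p) V

/-- Renaming of a formula: replace each occurrence of an atom `p ∈ V` by `¬p`. -/
def renForm (V : Finset α) : PropForm α → PropForm α
  | var p => if p ∈ V then neg (var p) else var p
  | tru => tru
  | fls => fls
  | neg φ => neg (renForm V φ)
  | conj φ ψ => conj (renForm V φ) (renForm V ψ)
  | disj φ ψ => disj (renForm V φ) (renForm V ψ)

/-- `φ` is irrelevant to the atoms in `V`: it is equivalent to a formula not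
mentioning any atom of `V`. -/
def IR (φ : PropForm α) (V : List α) : Prop :=
  ∃ φ' : PropForm α, equivalent φ φ' ∧ ∀ p ∈ V, p ∉ vars φ'

end PropForm

/-- The formula corresponding to a literal. -/
def litToForm (l : α × Bool) : PropForm α :=
  if l.2 then PropForm.var l.1 else PropForm.neg (PropForm.var l.1)

/-- The disjunction of the literals of a clause. -/
noncomputable def clauseToForm (c : Clause α) : PropForm α :=
  c.toList.foldr (fun l φ => PropForm.disj (litToForm l) φ) PropForm.fls

/-- The conjunction of the clauses of a CNF theory. -/
noncomputable def cnfToForm (T : Finset (Clause α)) : PropForm α :=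
  T.toList.foldr (fun c φ => PropForm.conj (clauseToForm c) φ) PropForm.tru

/-- `φ` is Horn expressible. -/
def HornExpressible (φ : PropForm α) : Prop :=
  ∃ T : Finset (Clause α), (∀ c ∈ T, IsClause c) ∧ IsHornTheory T ∧
    PropForm.equivalent φ (cnfToForm T)

/-- `φ` is Krom expressible. -/
def KromExpressible (φ : PropForm α) : Prop :=
  ∃ T : Finset (Clause α), (∀ c ∈ T, IsClause c) ∧ IsKromTheory T ∧
    PropForm.equivalent φ (cnfToForm T)

/-- `φ` is renamable-Horn expressible. -/
def RenHornExpressible (φ : PropForm α) : Prop :=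
  ∃ T : Finset (Clause α), (∀ c ∈ T, IsClause c) ∧ IsRenHorn T ∧
    PropForm.equivalent φ (cnfToForm T)

/-- `φ` is q-Horn expressible. -/
def QHornExpressible (φ : PropForm α) : Prop :=
  ∃ T : Finset (Clause α), (∀ c ∈ T, IsClause c) ∧ IsQHorn T ∧
    PropForm.equivalent φ (cnfToForm T)

/-- A formula entails a clause. -/
def EntailsClause (φ : PropForm α) (c : Clause α) : Prop :=
  ∀ I : Set α, PropForm.Sat I φ → clauseSat I c

/-- A prime implicate of a formula. -/
def IsPrimeImplicate (φ : PropForm α) (c : Clause α) : Prop :=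
  IsClause c ∧ EntailsClause φ c ∧ ∀ c' ⊂ c, ¬ EntailsClause φ c'

/-- A term entails a formula. -/
def TermEntails (t : Clause α) (φ : PropForm α) : Prop :=
  ∀ I : Set α, termSat I t → PropForm.Sat I φ

/-- A prime implicant of a formula. -/
def IsPrimeImplicant (φ : PropForm α) (t : Clause α) : Prop :=
  IsClause t ∧ TermEntails t φ ∧ ∀ t' ⊂ t, ¬ TermEntails t' φ

/-- A CNF theory entails a clause. -/
def TheoryEntailsClause (T : Finset (Clause α)) (c : Clause α) : Prop :=
  ∀ I : Set α, cnfSat I T → clauseSat I c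

/-- A prime implicate of a CNF theory. -/
def IsPrimeImplicateT (T : Finset (Clause α)) (c : Clause α) : Prop :=
  IsClause c ∧ TheoryEntailsClause T c ∧ ∀ c' ⊂ c, ¬ TheoryEntailsClause T c'

/-- The set of prime implicates of a CNF theory, as a finite theory. -/
noncomputable def PI (T : Finset (Clause α)) : Finset (Clause α) :=
  (Set.toFinite {c : Clause α | IsPrimeImplicateT T c}).toFinset

/-- Strong unfolding of a CNF theory w.r.t. an atom `p`: keep the clauses not
mentioning `p`, and replace the clauses containing the positive literal `p` by all
their resolvents with clauses containing `¬p`; clauses containing `¬p` are removed. -/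
def unfold1 (T : Finset (Clause α)) (p : α) : Finset (Clause α) :=
  T.filter (fun c => (p, true) ∉ c ∧ (p, false) ∉ c) ∪
    ((T ×ˢ T).filter fun cc =>
        (p, true) ∈ cc.1 ∧ (p, false) ∈ cc.2 ∧ IsClause (res cc.1 cc.2 p)).image
      fun cc => res cc.1 cc.2 p

/-- Iterated strong unfolding w.r.t. a set of atoms (presented as a list):
`unfold(T, ∅) = T` and `unfold(T, V ∪ {p}) = unfold(unfold(T, p), V)`. -/
def unfoldList (T : Finset (Clause α)) : List α → Finset (Clause α)
  | [] => T
  | p :: V => unfoldList (unfold1 T p) V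

/-!
Resolution is complete for consequence finding: every legal clause entailed by a set of clauses
contains one derived by resolution, so a prime implicate is itself derived by resolution. It is
therefore enough that the defining conditions survive a resolution step. Renaming commutes with
resolution, and Horn clauses are the clauses satisfying the QH-conditions with `Q = ∅`, so all three
cases reduce to the following: if `p` is resolved upon, then either `p ∈ Q`, neither parent has a
positive `H`-atom, and each of them loses one of its at most two `Q`-atoms; or `p ∈ H`, and the
parent in which `p` is positive contributes neither a `Q`-atom nor a positive `H`-atom.
-/

section Resolution

omit [Fintype α]

variable {T : Finset (Clause α)} {c c' d d' : Clause α} {p : α}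

theorem mem_varsC : p ∈ varsC c ↔ ∃ b, (p, b) ∈ c := by
  simp [varsC]

theorem mem_posC : p ∈ posC c ↔ (p, true) ∈ c := by
  simp [posC]

theorem posC_subset_varsC (c : Clause α) : posC c ⊆ varsC c :=
  Finset.image_subset_image (Finset.filter_subset _ _)

theorem varsC_subset_varsT (hc : c ∈ T) : varsC c ⊆ varsT T :=
  Finset.le_sup (f := varsC) hc

theorem mem_res {l : α × Bool} : l ∈ res c c' p ↔ (l ∈ c ∨ l ∈ c') ∧ l.1 ≠ p := by
  obtain ⟨q, _ | _⟩ := l <;> simp [res]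

theorem res_comm (c c' : Clause α) (p : α) : res c c' p = res c' c p := by
  rw [res, res, Finset.union_comm]

theorem varsC_res (c c' : Clause α) (p : α) :
    varsC (res c c' p) = (varsC c ∪ varsC c').erase p := by
  ext q
  simp only [mem_varsC, mem_res, Finset.mem_erase, Finset.mem_union, exists_and_right, exists_or]
  exact and_comm

theorem posC_res (c c' : Clause α) (p : α) :
    posC (res c c' p) = (posC c ∪ posC c').erase p := by
  ext q
  simp only [mem_posC, mem_res, Finset.mem_erase, Finset.mem_union, and_comm]

theorem ResolvableOn.symm (h : ResolvableOn c c' p) : ResolvableOn c' c p :=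
  ⟨h.1.symm.imp And.symm And.symm, res_comm c c' p ▸ h.2⟩

omit [DecidableEq α] in
theorem IsClause.mono (hc : IsClause c) (hdc : d ⊆ c) : IsClause d :=
  fun p hp => hc p ⟨hdc hp.1, hdc hp.2⟩

theorem IsClause.insert (hc : IsClause c) (hp : p ∉ varsC c) (b : Bool) :
    IsClause (insert (p, b) c) := by
  have hpc : ∀ b', (p, b') ∉ c := fun b' h => hp (mem_varsC.2 ⟨b', h⟩)
  intro q
  by_cases hqp : q = p
  · subst hqp
    cases b <;> simp [hpc]
  · simpa [hqp] using hc q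

theorem varsC_insert (l : α × Bool) (c : Clause α) : varsC (insert l c) = insert l.1 (varsC c) :=
  Finset.image_insert _ _ _

omit [DecidableEq α] in
theorem clauseSat_mono {I : Set α} (hcd : c ⊆ d) : clauseSat I c → clauseSat I d :=
  fun ⟨l, hl, hI⟩ => ⟨l, hcd hl, hI⟩

omit [DecidableEq α] in
theorem litSat_not {I : Set α} {b : Bool} : litSat I (p, !b) ↔ ¬ litSat I (p, b) := by
  cases b <;> simp [litSat]

omit [DecidableEq α] in
theorem IsClause.notMem_not (hc : IsClause c) {b : Bool} (h : (p, b) ∈ c) : (p, !b) ∉ c := by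
  cases b
  · exact fun h' => hc p ⟨h', h⟩
  · exact fun h' => hc p ⟨h, h'⟩

omit [DecidableEq α] in
theorem IsClause.eq_of_mem (hc : IsClause c) {b b' : Bool} (h : (p, b) ∈ c) (h' : (p, b') ∈ c) :
    b' = b :=
  by_contra fun hb => hc.notMem_not h (Bool.eq_not.2 hb ▸ h')

theorem resolvableOn_iff :
    ResolvableOn c c' p ↔ (∃ b, (p, b) ∈ c ∧ (p, !b) ∈ c') ∧ IsClause (res c c' p) := by
  simp [ResolvableOn, or_comm]

theorem clauseSat_res {I : Set α} (hc : IsClause c) (hc' : IsClause c') (hr : ResolvableOn c c' p)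
    (h : clauseSat I c) (h' : clauseSat I c') : clauseSat I (res c c' p) := by
  obtain ⟨⟨b, hb, hb'⟩, -⟩ := resolvableOn_iff.1 hr
  obtain ⟨⟨q, β⟩, hl, hI⟩ := h
  obtain ⟨⟨q', β'⟩, hl', hI'⟩ := h'
  by_cases hq : q = p
  · by_cases hq' : q' = p
    · subst hq hq'
      rw [hc.eq_of_mem hb hl] at hI
      rw [hc'.eq_of_mem hb' hl'] at hI'
      exact absurd hI (litSat_not.1 hI')
    · exact ⟨(q', β'), mem_res.2 ⟨.inr hl', hq'⟩, hI'⟩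
  · exact ⟨(q, β), mem_res.2 ⟨.inl hl, hq⟩, hI⟩

/-- The closure of a CNF theory under resolution, i.e. the set of clauses derivable from it. -/
def resClosure (T : Finset (Clause α)) : Set (Clause α) := ⋃ n, resIter T n

theorem subset_resClosure (T : Finset (Clause α)) : (T : Set (Clause α)) ⊆ resClosure T :=
  Set.subset_iUnion (resIter T) 0

theorem resIter_mono (T : Finset (Clause α)) : Monotone (resIter T) :=
  monotone_nat_of_le_succ fun _ => Set.subset_union_left

theorem res_mem_resClosure (hc : c ∈ resClosure T) (hc' : c' ∈ resClosure T)
    (hr : ResolvableOn c c' p) : res c c' p ∈ resClosure T := by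
  obtain ⟨m, hm⟩ := Set.mem_iUnion.1 hc
  obtain ⟨n, hn⟩ := Set.mem_iUnion.1 hc'
  refine Set.mem_iUnion.2 ⟨max m n + 1, .inr ⟨c, ?_, c', ?_, p, hr, rfl⟩⟩
  · exact resIter_mono T (le_max_left m n) hm
  · exact resIter_mono T (le_max_right m n) hn

theorem resClosure_induction {P : Clause α → Prop} (base : ∀ c ∈ T, P c)
    (step : ∀ c c' p, ResolvableOn c c' p → P c → P c' → P (res c c' p))
    (hc : c ∈ resClosure T) : P c := by
  rw [resClosure, Set.mem_iUnion] at hc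
  obtain ⟨n, hn⟩ := hc
  induction n generalizing c with
  | zero => exact base c hn
  | succ n ih =>
    obtain hn | ⟨d, hd, d', hd', p, hr, rfl⟩ := hn
    · exact ih hn
    · exact step d d' p hr (ih hd) (ih hd')

theorem theoryEntailsClause_of_mem_resClosure (hT : ∀ c ∈ T, IsClause c) (hc : c ∈ resClosure T) :
    TheoryEntailsClause T c := by
  suffices h : IsClause c ∧ TheoryEntailsClause T c from h.2
  refine resClosure_induction (P := fun c => IsClause c ∧ TheoryEntailsClause T c)
    (fun c hcT => ⟨hT c hcT, fun I hI => hI c hcT⟩) ?_ hc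
  rintro c c' p hr ⟨hc, hTc⟩ ⟨hc', hTc'⟩
  exact ⟨hr.2, fun I hI => clauseSat_res hc hc' hr (hTc I hI) (hTc' I hI)⟩

/-- The interpretation falsifying every literal of the clause `c`; atoms outside `c` are false. -/
def falsifier (c : Clause α) : Set α := {p | (p, false) ∈ c}

theorem litSat_falsifier (hc : IsClause c) {l : α × Bool} (hl : l.1 ∈ varsC c) :
    litSat (falsifier c) l ↔ l ∉ c := by
  obtain ⟨p, b⟩ := l
  obtain ⟨β, hβ⟩ := mem_varsC.1 hl
  have := hc p
  cases b <;> cases β <;> simp_all [litSat, falsifier]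

theorem exists_mem_subset_of_varsT_subset (hc : IsClause c) (hTc : TheoryEntailsClause T c)
    (hvars : varsT T ⊆ varsC c) : ∃ d ∈ T, d ⊆ c := by
  by_contra! hnot
  have hsat : cnfSat (falsifier c) T := fun d hd => by
    obtain ⟨l, hld, hlc⟩ := Finset.not_subset.1 (hnot d hd)
    have hl : l.1 ∈ varsC c :=
      hvars (varsC_subset_varsT hd (Finset.mem_image_of_mem Prod.fst hld))
    exact ⟨l, hld, (litSat_falsifier hc hl).2 hlc⟩
  obtain ⟨l, hlc, hl⟩ := hTc _ hsat
  exact (litSat_falsifier hc (Finset.mem_image_of_mem Prod.fst hlc)).1 hl hlc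

theorem exists_mem_resClosure_subset_of_insert (hc : IsClause c)
    (hd : d ∈ resClosure T) (hdc : d ⊆ insert (p, true) c)
    (hd' : d' ∈ resClosure T) (hdc' : d' ⊆ insert (p, false) c) :
    ∃ e ∈ resClosure T, e ⊆ c := by
  by_cases hp : (p, true) ∈ d
  · by_cases hp' : (p, false) ∈ d'
    · have hsub : res d d' p ⊆ c := fun l hl => by
        obtain ⟨hl | hl, hlp⟩ := mem_res.1 hl
        · exact Finset.mem_of_mem_insert_of_ne (hdc hl) fun h => hlp (congrArg Prod.fst h)
        · exact Finset.mem_of_mem_insert_of_ne (hdc' hl) fun h => hlp (congrArg Prod.fst h)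
      exact ⟨_, res_mem_resClosure hd hd' ⟨.inl ⟨hp, hp'⟩, hc.mono hsub⟩, hsub⟩
    · exact ⟨d', hd', (Finset.subset_insert_iff_of_notMem hp').1 hdc'⟩
  · exact ⟨d, hd, (Finset.subset_insert_iff_of_notMem hp).1 hdc⟩

/- Induction on the number of atoms of `T` missing from `c`: a missing atom `p` is added to `c` in
both polarities, and the two derived clauses are resolved upon `p`. -/
theorem exists_mem_resClosure_subset (hc : IsClause c) (hTc : TheoryEntailsClause T c) :
    ∃ d ∈ resClosure T, d ⊆ c := by
  induction hU : varsT T \ varsC c using Finset.strongInductionOn generalizing c with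
  | _ U ih =>
    subst hU
    by_cases hvars : varsT T ⊆ varsC c
    · obtain ⟨d, hd, hdc⟩ := exists_mem_subset_of_varsT_subset hc hTc hvars
      exact ⟨d, subset_resClosure T hd, hdc⟩
    · obtain ⟨p, hpT, hpc⟩ := Finset.not_subset.1 hvars
      have hfewer : ∀ b, varsT T \ varsC (insert (p, b) c) ⊂ varsT T \ varsC c := fun b => by
        rw [varsC_insert, Finset.sdiff_insert]
        exact Finset.erase_ssubset (Finset.mem_sdiff.2 ⟨hpT, hpc⟩)
      have hext : ∀ b, ∃ d ∈ resClosure T, d ⊆ insert (p, b) c := fun b =>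
        ih _ (hfewer b) (hc.insert hpc b)
          (fun I hI => clauseSat_mono (Finset.subset_insert _ _) (hTc I hI)) rfl
      obtain ⟨d, hd, hdc⟩ := hext true
      obtain ⟨d', hd', hdc'⟩ := hext false
      exact exists_mem_resClosure_subset_of_insert hc hd hdc hd' hdc'

theorem IsPrimeImplicateT.mem_resClosure (hT : ∀ c ∈ T, IsClause c) (hc : IsPrimeImplicateT T c) :
    c ∈ resClosure T := by
  obtain ⟨hclause, hTc, hmin⟩ := hc
  obtain ⟨d, hd, hdc⟩ := exists_mem_resClosure_subset hclause hTc
  obtain rfl | hlt := hdc.eq_or_ssubset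
  · exact hd
  · exact absurd (theoryEntailsClause_of_mem_resClosure hT hd) (hmin d hlt)

end Resolution

section Renaming

omit [Fintype α]

variable {c c' : Clause α} {p : α}

theorem renLit_renLit (V : Finset α) (l : α × Bool) : renLit V (renLit V l) = l := by
  by_cases hl : l.1 ∈ V <;> simp [renLit, hl]

theorem fst_renLit (V : Finset α) (l : α × Bool) : (renLit V l).1 = l.1 := by
  rw [renLit, apply_ite Prod.fst, ite_self]

theorem mem_renClause {V : Finset α} {l : α × Bool} : l ∈ renClause V c ↔ renLit V l ∈ c := by
  constructor
  · intro h
    obtain ⟨l', hl', rfl⟩ := Finset.mem_image.1 h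
    rwa [renLit_renLit]
  · exact fun h => Finset.mem_image.2 ⟨renLit V l, h, renLit_renLit V l⟩

theorem renClause_empty (c : Clause α) : renClause ∅ c = c := by
  ext l
  simp [mem_renClause, renLit]

theorem renTheory_empty (T : Finset (Clause α)) : renTheory ∅ T = T := by
  rw [renTheory, funext renClause_empty, Finset.image_id']

theorem renClause_res (V : Finset α) (c c' : Clause α) (p : α) :
    renClause V (res c c' p) = res (renClause V c) (renClause V c') p := by
  ext l
  simp only [mem_renClause, mem_res, fst_renLit]

theorem IsClause.renClause (hc : IsClause c) (V : Finset α) : IsClause (renClause V c) := by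
  intro p
  by_cases hp : p ∈ V
  · simpa [mem_renClause, renLit, hp, and_comm] using hc p
  · simpa [mem_renClause, renLit, hp] using hc p

theorem ResolvableOn.renClause (h : ResolvableOn c c' p) (V : Finset α) :
    ResolvableOn (renClause V c) (renClause V c') p := by
  refine ⟨?_, renClause_res V c c' p ▸ h.2.renClause V⟩
  by_cases hp : p ∈ V
  · simpa [mem_renClause, renLit, hp, or_comm] using h.1
  · simpa [mem_renClause, renLit, hp] using h.1

end Renaming

section QHConditions

section

omit [Fintype α]

variable {Q H : Finset α} {c c' d : Clause α} {p : α}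

theorem QHcond.mono (h : QHcond Q H c) (hQ : varsC d ∩ Q ⊆ varsC c ∩ Q)
    (hH : posC d ∩ H ⊆ posC c ∩ H) : QHcond Q H d := by
  obtain ⟨hQ2, hH1, hexcl⟩ := h
  have hcard := Finset.card_le_card hH
  refine ⟨(Finset.card_le_card hQ).trans hQ2, hcard.trans hH1, fun hd => ?_⟩
  exact Finset.subset_empty.1 (hexcl (by omega) ▸ hQ)

theorem QHcond.posC_inter_eq_empty (h : QHcond Q H c) (hc : p ∈ varsC c) (hQ : p ∈ Q) :
    posC c ∩ H = ∅ := by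
  have hne : (posC c ∩ H).card ≠ 1 := fun h1 =>
    Finset.notMem_empty p (h.2.2 h1 ▸ Finset.mem_inter.2 ⟨hc, hQ⟩)
  exact Finset.card_eq_zero.1 (by have := h.2.1; omega)

theorem QHcond.card_erase_le_one (h : QHcond Q H c) (hc : p ∈ varsC c) (hQ : p ∈ Q) :
    ((varsC c ∩ Q).erase p).card ≤ 1 := by
  rw [Finset.card_erase_of_mem (Finset.mem_inter.2 ⟨hc, hQ⟩)]
  exact Nat.sub_le_of_le_add h.1

theorem QHcond.res_of_mem_Q (h : QHcond Q H c) (h' : QHcond Q H c') (hQ : p ∈ Q)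
    (hc : p ∈ varsC c) (hc' : p ∈ varsC c') : QHcond Q H (res c c' p) := by
  have hpos : posC (res c c' p) ∩ H = ∅ := by
    rw [posC_res, Finset.erase_inter, Finset.union_inter_distrib_right,
      h.posC_inter_eq_empty hc hQ, h'.posC_inter_eq_empty hc' hQ]
    rfl
  have hvars : (varsC (res c c' p) ∩ Q).card ≤ 2 := calc
    (varsC (res c c' p) ∩ Q).card
      = ((varsC c ∩ Q).erase p ∪ (varsC c' ∩ Q).erase p).card := by
        rw [varsC_res, Finset.erase_inter, Finset.union_inter_distrib_right,
          Finset.erase_union_distrib]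
    _ ≤ ((varsC c ∩ Q).erase p).card + ((varsC c' ∩ Q).erase p).card := Finset.card_union_le _ _
    _ ≤ 1 + 1 := add_le_add (h.card_erase_le_one hc hQ) (h'.card_erase_le_one hc' hQ)
  exact ⟨hvars, by simp [hpos], by simp [hpos]⟩

theorem QHcond.res_of_mem_H (h : QHcond Q H c) (h' : QHcond Q H c') (hH : p ∈ H)
    (hc : p ∈ posC c) : QHcond Q H (res c c' p) := by
  obtain ⟨-, hH1, hexcl⟩ := h
  have hp : p ∈ posC c ∩ H := Finset.mem_inter.2 ⟨hc, hH⟩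
  have hpos : posC c ∩ H = {p} :=
    Finset.eq_singleton_iff_unique_mem.2 ⟨hp, fun q hq => Finset.card_le_one.1 hH1 q hq p hp⟩
  have hvars : varsC c ∩ Q = ∅ := hexcl (by rw [hpos, Finset.card_singleton])
  refine h'.mono ?_ ?_
  · rw [varsC_res, Finset.erase_inter, Finset.union_inter_distrib_right, hvars,
      Finset.empty_union]
    exact Finset.erase_subset _ _
  · rw [posC_res, Finset.erase_inter, Finset.union_inter_distrib_right, hpos,
      Finset.erase_union_distrib, Finset.erase_singleton, Finset.empty_union]
    exact Finset.erase_subset _ _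

theorem ResolvableOn.qhCond_res (hr : ResolvableOn c c' p) (hQH : p ∈ Q ∪ H)
    (h : QHcond Q H c) (h' : QHcond Q H c') : QHcond Q H (res c c' p) := by
  wlog hp : (p, true) ∈ c ∧ (p, false) ∈ c' generalizing c c'
  · rw [res_comm]
    exact this hr.symm h' h (hr.1.resolve_left hp).symm
  obtain hQ | hH := Finset.mem_union.1 hQH
  · exact h.res_of_mem_Q h' hQ (mem_varsC.2 ⟨_, hp.1⟩) (mem_varsC.2 ⟨_, hp.2⟩)
  · exact h.res_of_mem_H h' hH (mem_posC.2 hp.1)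

theorem qhCond_congr {Q' H' : Finset α} (hQ : varsC c ∩ Q = varsC c ∩ Q')
    (hH : posC c ∩ H = posC c ∩ H') : QHcond Q H c ↔ QHcond Q' H' c := by
  rw [QHcond, QHcond, hQ, hH]

end

variable {T : Finset (Clause α)} {c : Clause α}

theorem qhCond_empty_iff_hornClause : QHcond ∅ ∅ᶜ c ↔ HornClause c := by
  simp [QHcond, HornClause]

theorem isHornTheory_iff_forall_qhCond : IsHornTheory T ↔ ∀ c ∈ T, QHcond ∅ ∅ᶜ c :=
  forall₂_congr fun _ _ => qhCond_empty_iff_hornClause.symm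

theorem hasQHPartition_iff_exists_compl : HasQHPartition T ↔ ∃ Q, ∀ c ∈ T, QHcond Q Qᶜ c := by
  constructor
  · rintro ⟨Q, H, hdisj, hunion, h⟩
    refine ⟨Q, fun c hc => (qhCond_congr rfl ?_).1 (h c hc)⟩
    ext p
    simp only [Finset.mem_inter, Finset.mem_compl, and_congr_right_iff]
    intro hp
    have hpQH : p ∈ Q ∪ H := hunion ▸ varsC_subset_varsT hc (posC_subset_varsC c hp)
    have hpdisj : p ∉ Q ∩ H := hdisj ▸ Finset.notMem_empty p
    rw [Finset.mem_union] at hpQH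
    rw [Finset.mem_inter] at hpdisj
    tauto
  · rintro ⟨Q, h⟩
    refine ⟨varsT T ∩ Q, varsT T \ Q, inf_inf_sdiff .., sup_inf_sdiff ..,
      fun c hc => (qhCond_congr ?_ ?_).1 (h c hc)⟩
    · rw [← Finset.inter_assoc, Finset.inter_eq_left.2 (varsC_subset_varsT hc)]
    · rw [Finset.sdiff_eq_inter_compl, ← Finset.inter_assoc,
        Finset.inter_eq_left.2 ((posC_subset_varsC c).trans (varsC_subset_varsT hc))]

omit [DecidableEq α] in
theorem mem_PI : c ∈ PI T ↔ IsPrimeImplicateT T c :=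
  Set.Finite.mem_toFinset _

theorem forall_mem_renTheory_PI_qhCond (hT : ∀ c ∈ T, IsClause c) {V Q : Finset α}
    (h : ∀ c ∈ renTheory V T, QHcond Q Qᶜ c) : ∀ c ∈ renTheory V (PI T), QHcond Q Qᶜ c := by
  simp only [renTheory, Finset.forall_mem_image] at h ⊢
  intro c hc
  refine resClosure_induction (P := fun c => QHcond Q Qᶜ (renClause V c)) (fun _ hc => h hc) ?_
    ((mem_PI.1 hc).mem_resClosure hT)
  intro d d' p hr hd hd'
  rw [renClause_res]
  exact (hr.renClause V).qhCond_res (by simp) hd hd'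

end QHConditions

/-- If a CNF theory `Σ` is Horn (resp. Horn renamable, q-Horn), then
the theory `PI(Σ)` of its prime implicates is Horn (resp. Horn renamable, q-Horn). -/
theorem prime_implicates_preserve_horn_variants
    (S : Finset (Clause α)) (hS : ∀ c ∈ S, IsClause c) :
    (IsHornTheory S → IsHornTheory (PI S)) ∧
    (IsRenHorn S → IsRenHorn (PI S)) ∧
    (IsQHorn S → IsQHorn (PI S)) := by
  have hornRen (V : Finset α) (h : IsHornTheory (renTheory V S)) :
      IsHornTheory (renTheory V (PI S)) := by
    rw [isHornTheory_iff_forall_qhCond] at h ⊢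
    exact forall_mem_renTheory_PI_qhCond hS h
  refine ⟨fun h => ?_, fun ⟨V, h⟩ => ⟨V, hornRen V h⟩, fun ⟨V, h⟩ => ⟨V, ?_⟩⟩
  · simpa only [renTheory_empty] using hornRen ∅ (by rwa [renTheory_empty])
  · obtain ⟨Q, hQ⟩ := hasQHPartition_iff_exists_compl.1 h
    exact hasQHPartition_iff_exists_compl.2 ⟨Q, forall_mem_renTheory_PI_qhCond hS hQ⟩
end

section
/- Let Π be a CNF theory and p an atom. Then Forget(Π, {p}) ≡ unfold(Π, p), where unfold(Π, p) is the strong unfolding of Π with respect to p. -/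
variable {α : Type*} [Fintype α] [DecidableEq α]

/-!
Forgetting `p` asks for a truth value of `p` that makes every clause true. Write `E c` for the
truth, in the given interpretation, of the clause `c` with its `p`-literals erased. Choosing `p`
true works iff every clause without `p` has `E c`; choosing `p` false works iff every clause
without `¬p` has `E c`. If the first choice fails at a clause `c'`, then `c'` contains `¬p` and
`E c'` is false, so the resolvents of `c'` force `E c` for each clause `c` containing `p`, and the
second choice works. Tautological resolvents, which unfolding discards, impose no constraint.
-/

section

omit [Fintype α]

section Semantics

omit [DecidableEq α]

namespace PropForm

theorem sat_foldr_disj {ι : Type*} (I : Set α) (f : ι → PropForm α) (L : List ι) :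
    Sat I (L.foldr (fun i φ => disj (f i) φ) fls) ↔ ∃ i ∈ L, Sat I (f i) := by
  induction L with
  | nil => simp [Sat]
  | cons i L ih => simp only [List.foldr_cons, Sat, ih, List.exists_mem_cons_iff]

theorem sat_foldr_conj {ι : Type*} (I : Set α) (f : ι → PropForm α) (L : List ι) :
    Sat I (L.foldr (fun i φ => conj (f i) φ) tru) ↔ ∀ i ∈ L, Sat I (f i) := by
  induction L with
  | nil => simp [Sat]
  | cons i L ih => simp only [List.foldr_cons, Sat, ih, List.forall_mem_cons]

end PropForm

theorem sat_litToForm (I : Set α) (l : α × Bool) :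
    PropForm.Sat I (litToForm l) ↔ litSat I l := by
  obtain ⟨q, _ | _⟩ := l <;> simp [litToForm, litSat, PropForm.Sat]

theorem sat_clauseToForm (I : Set α) (c : Clause α) :
    PropForm.Sat I (clauseToForm c) ↔ clauseSat I c := by
  simp only [clauseToForm, PropForm.sat_foldr_disj, sat_litToForm, Finset.mem_toList, clauseSat]

theorem sat_cnfToForm (I : Set α) (T : Finset (Clause α)) :
    PropForm.Sat I (cnfToForm T) ↔ cnfSat I T := by
  simp only [cnfToForm, PropForm.sat_foldr_conj, sat_clauseToForm, Finset.mem_toList, cnfSat]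

theorem clauseSat_of_not_isClause {c : Clause α} (hc : ¬ IsClause c) (I : Set α) :
    clauseSat I c := by
  obtain ⟨q, hpos, hneg⟩ : ∃ q, (q, true) ∈ c ∧ (q, false) ∈ c := by
    simpa only [IsClause, not_forall, not_not] using hc
  by_cases hq : q ∈ I
  · exact ⟨_, hpos, by simpa [litSat] using hq⟩
  · exact ⟨_, hneg, by simpa [litSat] using hq⟩

end Semantics

namespace PropForm

theorem sat_subst {I J : Set α} {p : α} {χ : PropForm α} (hp : p ∈ J ↔ Sat I χ)
    (hIJ : ∀ q ≠ p, (q ∈ J ↔ q ∈ I)) (φ : PropForm α) :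
    Sat I (subst p χ φ) ↔ Sat J φ := by
  induction φ with
  | var q =>
    obtain rfl | hq := eq_or_ne q p
    · simp only [subst, if_true, Sat, hp]
    · simp only [subst, if_neg hq, Sat, hIJ q hq]
  | tru | fls => rfl
  | neg φ ih => simp only [subst, Sat, ih]
  | conj φ ψ ihφ ihψ | disj φ ψ ihφ ihψ => simp only [subst, Sat, ihφ, ihψ]

theorem sat_Forget_singleton (I : Set α) (φ : PropForm α) (p : α) :
    Sat I (Forget φ [p]) ↔ Sat (insert p I) φ ∨ Sat (I \ {p}) φ :=
  or_congr (sat_subst (by simp [Sat]) (by simp +contextual) φ)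
    (sat_subst (by simp [Sat]) (by simp +contextual) φ)

end PropForm

/-- The clause `c` without its literals on the atom `p`; a resolvent on `p` is the union of two
such clauses. -/
def eraseAtom (c : Clause α) (p : α) : Clause α := c \ {(p, true), (p, false)}

theorem mem_eraseAtom {c : Clause α} {p : α} {l : α × Bool} :
    l ∈ eraseAtom c p ↔ l ∈ c ∧ l.1 ≠ p := by
  obtain ⟨q, _ | _⟩ := l <;> simp [eraseAtom]

theorem eraseAtom_eq_self {c : Clause α} {p : α} (hpos : (p, true) ∉ c) (hneg : (p, false) ∉ c) :
    eraseAtom c p = c := by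
  simp [eraseAtom, hpos, hneg]

theorem clauseSat_res_s14 (I : Set α) (c c' : Clause α) (p : α) :
    clauseSat I (res c c' p) ↔ clauseSat I (eraseAtom c p) ∨ clauseSat I (eraseAtom c' p) := by
  have hres : res c c' p = eraseAtom c p ∪ eraseAtom c' p := Finset.union_sdiff_distrib ..
  simp only [hres, clauseSat, Finset.mem_union, or_and_right, exists_or]

theorem clauseSat_iff_eraseAtom {I J : Set α} {p : α} (hIJ : ∀ q ≠ p, (q ∈ J ↔ q ∈ I))
    (c : Clause α) :
    clauseSat J c ↔
      (p, true) ∈ c ∧ p ∈ J ∨ (p, false) ∈ c ∧ p ∉ J ∨ clauseSat I (eraseAtom c p) := by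
  have litSat_congr {l : α × Bool} (hl : l.1 ≠ p) : litSat J l ↔ litSat I l := by
    simp only [litSat, hIJ l.1 hl]
  constructor
  · rintro ⟨⟨q, b⟩, hl, hsat⟩
    obtain rfl | hq := eq_or_ne q p
    · cases b <;> simp_all [litSat]
    · exact .inr (.inr ⟨_, mem_eraseAtom.2 ⟨hl, hq⟩, (litSat_congr hq).1 hsat⟩)
  · rintro (⟨hl, hp⟩ | ⟨hl, hp⟩ | ⟨l, hl, hsat⟩)
    · exact ⟨_, hl, by simpa [litSat] using hp⟩
    · exact ⟨_, hl, by simpa [litSat] using hp⟩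
    · obtain ⟨hlc, hlp⟩ := mem_eraseAtom.1 hl
      exact ⟨l, hlc, (litSat_congr hlp).2 hsat⟩

theorem clauseSat_insert (I : Set α) (p : α) (c : Clause α) :
    clauseSat (insert p I) c ↔ (p, true) ∈ c ∨ clauseSat I (eraseAtom c p) := by
  simpa using clauseSat_iff_eraseAtom (I := I) (J := insert p I) (p := p) (by simp +contextual) c

theorem clauseSat_sdiff_singleton (I : Set α) (p : α) (c : Clause α) :
    clauseSat (I \ {p}) c ↔ (p, false) ∈ c ∨ clauseSat I (eraseAtom c p) := by
  simpa using clauseSat_iff_eraseAtom (I := I) (J := I \ {p}) (p := p) (by simp +contextual) c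

end

theorem mem_unfold1 {T : Finset (Clause α)} {p : α} {d : Clause α} :
    d ∈ unfold1 T p ↔ (d ∈ T ∧ (p, true) ∉ d ∧ (p, false) ∉ d) ∨
      ∃ c ∈ T, ∃ c' ∈ T, (p, true) ∈ c ∧ (p, false) ∈ c' ∧ IsClause (res c c' p) ∧
        res c c' p = d := by
  simp only [unfold1, Finset.mem_union, Finset.mem_filter, Finset.mem_image, Finset.mem_product,
    Prod.exists]
  grind

theorem cnfSat_unfold1 (I : Set α) (T : Finset (Clause α)) (p : α) :
    cnfSat I (unfold1 T p) ↔
      (∀ c ∈ T, (p, true) ∉ c → (p, false) ∉ c → clauseSat I (eraseAtom c p)) ∧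
      ∀ c ∈ T, ∀ c' ∈ T, (p, true) ∈ c → (p, false) ∈ c' →
        clauseSat I (eraseAtom c p) ∨ clauseSat I (eraseAtom c' p) := by
  constructor
  · refine fun h => ⟨fun c hc hpos hneg => ?_, fun c hc c' hc' hpos hneg => ?_⟩
    · rw [eraseAtom_eq_self hpos hneg]
      exact h c (mem_unfold1.2 (.inl ⟨hc, hpos, hneg⟩))
    · rw [← clauseSat_res_s14]
      by_cases hres : IsClause (res c c' p)
      · exact h _ (mem_unfold1.2 (.inr ⟨c, hc, c', hc', hpos, hneg, hres, rfl⟩))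
      · exact clauseSat_of_not_isClause hres I
  · rintro ⟨hfree, hres⟩ d hd
    obtain ⟨hdT, hpos, hneg⟩ | ⟨c, hc, c', hc', hpos, hneg, -, rfl⟩ := mem_unfold1.1 hd
    · simpa only [eraseAtom_eq_self hpos hneg] using hfree d hdT hpos hneg
    · exact (clauseSat_res_s14 I c c' p).2 (hres c hc c' hc' hpos hneg)

theorem cnfSat_insert_or_sdiff_iff_unfold1 {T : Finset (Clause α)} {p : α}
    (hT : ∀ c ∈ T, ¬((p, true) ∈ c ∧ (p, false) ∈ c)) (I : Set α) :
    cnfSat (insert p I) T ∨ cnfSat (I \ {p}) T ↔ cnfSat I (unfold1 T p) := by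
  rw [cnfSat_unfold1]
  simp only [cnfSat, clauseSat_insert, clauseSat_sdiff_singleton]
  constructor
  · rintro (h | h)
    · exact ⟨fun c hc hpos _ => (h c hc).resolve_left hpos, fun _ _ c' hc' _ hneg =>
        .inr ((h c' hc').resolve_left fun hpos => hT c' hc' ⟨hpos, hneg⟩)⟩
    · exact ⟨fun c hc _ hneg => (h c hc).resolve_left hneg, fun c hc _ _ hpos _ =>
        .inl ((h c hc).resolve_left fun hneg => hT c hc ⟨hpos, hneg⟩)⟩
  · rintro ⟨hfree, hres⟩
    refine or_iff_not_imp_left.2 fun hfail c hc => or_iff_not_imp_left.2 fun hneg => ?_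
    obtain ⟨c', hc', hpos', hsat'⟩ :
        ∃ c' ∈ T, (p, true) ∉ c' ∧ ¬ clauseSat I (eraseAtom c' p) := by
      simpa only [not_forall, not_or, exists_prop] using hfail
    have hneg' : (p, false) ∈ c' := by_contra fun h => hsat' (hfree c' hc' hpos' h)
    by_cases hpos : (p, true) ∈ c
    · exact (hres c hc c' hc' hpos hneg').resolve_right hsat'
    · exact hfree c hc hpos hneg

/-- `Forget(Π, {p}) ≡ unfold(Π, p)` for a CNF theory `Π`. -/
theorem forget_equiv_unfold
    (T : Finset (Clause α)) (hT : ∀ c ∈ T, IsClause c) (p : α) :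
    PropForm.equivalent (PropForm.Forget (cnfToForm T) [p])
      (cnfToForm (unfold1 T p)) := by
  intro I
  simp only [PropForm.sat_Forget_singleton, sat_cnfToForm]
  exact cnfSat_insert_or_sdiff_iff_unfold1 (fun c hc => hT c hc p) I
end
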